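/- arXiv:2104.00354 — 5 statements merged into one kernel-verified Lean document; each statement's English description precedes it below -/
import Mathlib

section
/- Let H be a real Hilbert space, Y ⊆ H a nonempty closed convex set, f : H → ℝ convex and continuously differentiable with L_f-Lipschitz continuous gradient on Y, and g : H → ℝ ∪ {+∞} proper, convex and lower semicontinuous with dom(g) ⊆ Y ⊆ dom(f); set F = f + g. Let x̄ ∈ Y, τ > 0, let D be a bounded self-adjoint linear operator on H with η_inf·I ⪯ D ⪯ η_sup·I for some 0 < η_inf ≤ η_sup, let ε ≥ 0, let x̂ be the unique minimizer over H of h_{τ,D}(z; x̄) := f(x̄) + ⟨∇f(x̄), z − x̄⟩ + (1/(2τ))‖z − x̄‖²_D + g(z), and let x̃ ∈ dom(g) satisfy h_{τ,D}(x̃; x̄) − h_{τ,D}(x̂; x̄) ≤ ε. Then for every x ∈ H: F(x̃) + (1/(2τ))‖x − x̃‖²_D + ( (1/(2τ))‖x̃ − x̄‖²_D − 𝔻_f(x̃, x̄) ) ≤ F(x) + (1/(2τ))‖x − x̄‖²_D + ε + (√(2ετ)/τ)‖x − x̃‖_D. -/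
open scoped RealInnerProductSpace

/-!
The model `h` is the sum of a quadratic with Hessian `D / τ` and the convex function `g`, hence it
is strongly convex in the `D`-norm and grows quadratically away from its minimizer:
`h x̂ + ‖x - x̂‖²_D / (2τ) ≤ h x` (`quadratic_growth`, in real-number form). Applied at `x̃` this
gives `‖x̃ - x̂‖²_D ≤ 2ετ`; applied at `x`, together with the Cauchy–Schwarz inequality for `D`
(`scaled_cauchy_schwarz`), it gives
`h x̃ + ‖x - x̃‖²_D / (2τ) ≤ h x + ε + (√(2ετ) / τ) ‖x - x̃‖_D`. The left-hand side is the one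
claimed, because `f x̃` cancels, and `h x ≤ F x + ‖x - x̄‖²_D / (2τ)` is the gradient inequality for
the convex function `f`.
-/

/-- The one-dimensional content of quadratic growth: dividing the strong-convexity estimate by `t`
and letting `t → 0`. -/
lemma quadratic_growth {c p q : ℝ}
    (hpq : ∀ t : ℝ, 0 < t → t ≤ 1 → p ≤ t * q + (1 - t) * p - t * (1 - t) * c) :
    p + c ≤ q := by
  have key : ∀ t : ℝ, 0 < t → t ≤ 1 → (1 - t) * c ≤ q - p := by
    intro t ht ht1
    have h1 := hpq t ht ht1
    have h2 : t * ((1 - t) * c) ≤ t * (q - p) := by linarith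
    exact le_of_mul_le_mul_left h2 ht
  have h0 := key 1 one_pos le_rfl
  by_contra hcon
  have hd : 0 < c - (q - p) := by linarith
  have hc0 : 0 < c := by linarith
  -- This value of `t` makes `(1 - t) * c` the midpoint of `c` and `q - p`.
  have h1 := key ((c - (q - p)) / (2 * c)) (by positivity)
    (by rw [div_le_one (by positivity)]; linarith)
  have h2 : (1 - (c - (q - p)) / (2 * c)) * c = c - (c - (q - p)) / 2 := by
    field_simp
  linarith

lemma scaled_cauchy_schwarz {H : Type*} [NormedAddCommGroup H] [InnerProductSpace ℝ H]
    (D : H →L[ℝ] H) (hD_sa : ∀ x y : H, ⟪D x, y⟫ = ⟪x, D y⟫)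
    (hD : ∀ x : H, 0 ≤ ⟪D x, x⟫) (u v : H) :
    |⟪D u, v⟫| ≤ √⟪D u, u⟫ * √⟪D v, v⟫ := by
  have hs : ⟪D v, u⟫ = ⟪D u, v⟫ := by rw [hD_sa, real_inner_comm]
  have hdis := discrim_le_zero (a := ⟪D v, v⟫) (b := 2 * ⟪D u, v⟫) (c := ⟪D u, u⟫) (by
    intro t
    have h1 := hD (u + t • v)
    simp only [map_add, map_smul, inner_add_left, inner_add_right, real_inner_smul_left,
      real_inner_smul_right, hs] at h1
    linarith)
  rw [← Real.sqrt_mul (hD u)]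
  apply Real.abs_le_sqrt
  unfold discrim at hdis
  linarith

/-- The gradient inequality, obtained by restricting `f` to the line through `x` and `y`. -/
lemma convex_gradient_inequality {H : Type*} [NormedAddCommGroup H] [InnerProductSpace ℝ H]
    [CompleteSpace H] {f : H → ℝ} {v y : H} (hf : ConvexOn ℝ Set.univ f)
    (hv : HasGradientAt f v y) (x : H) : f y + ⟪v, x - y⟫ ≤ f x := by
  have hline : ConvexOn ℝ Set.univ (fun t : ℝ => f (AffineMap.lineMap y x t)) := by
    simpa using! hf.comp_affineMap (AffineMap.lineMap y x)
  have hder : HasDerivAt (fun t : ℝ => f (AffineMap.lineMap y x t)) ⟪v, x - y⟫ 0 := by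
    have h1 : HasDerivAt (fun t : ℝ => (AffineMap.lineMap y x t : H)) (x - y) 0 :=
      AffineMap.hasDerivAt_lineMap
    have h2 : HasFDerivAt f (InnerProductSpace.toDual ℝ H v)
        (AffineMap.lineMap y x (0 : ℝ)) := by
      simpa using! hv.hasFDerivAt
    simpa using! h2.comp_hasDerivAt (0 : ℝ) h1
  have h3 := hline.le_slope_of_hasDerivAt (Set.mem_univ 0) (Set.mem_univ 1) one_pos hder
  simp [slope_def_field] at h3
  linarith

/-- **Scaled inexact descent inequality (Lemma 2.3 of SAGE-FISTA).**
`g : H → EReal` is the proper convex lsc extended-real-valued function, `f` the smooth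
convex part with gradient `f'` which is `L_f`-Lipschitz on `Y`, and `D` a bounded
self-adjoint operator with `ηinf • I ⪯ D ⪯ ηsup • I`.  `h z = h_{τ,D}(z; x̄)`,
`x̂` its (unique) minimizer, and `x̃` an `ε`-approximation of `x̂`. -/
theorem inexact_scaled_descent_inequality
    {H : Type*} [NormedAddCommGroup H] [InnerProductSpace ℝ H] [CompleteSpace H]
    (Y : Set H) (hY_ne : Y.Nonempty) (hY_closed : IsClosed Y) (hY_convex : Convex ℝ Y)
    (f : H → ℝ) (f' : H → H) (L_f : ℝ)
    (hf_convex : ConvexOn ℝ Set.univ f)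
    (hf_grad : ∀ x : H, HasGradientAt f (f' x) x)
    (hf'_cont : Continuous f')
    (hf'_lip : ∀ x ∈ Y, ∀ y ∈ Y, ‖f' x - f' y‖ ≤ L_f * ‖x - y‖)
    (g : H → EReal)
    (hg_ne_bot : ∀ x : H, g x ≠ ⊥)
    (hg_proper : ∃ x : H, g x ≠ ⊤)
    (hg_convex : ∀ x y : H, ∀ lam : ℝ, 0 ≤ lam → lam ≤ 1 →
      g (lam • x + (1 - lam) • y) ≤ (lam : EReal) * g x + ((1 - lam : ℝ) : EReal) * g y)
    (hg_lsc : LowerSemicontinuous g)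
    (hdom : ∀ x : H, g x ≠ ⊤ → x ∈ Y)
    (xbar : H) (hxbar : xbar ∈ Y)
    (τ : ℝ) (hτ : 0 < τ)
    (D : H →L[ℝ] H)
    (hD_sa : ∀ x y : H, ⟪D x, y⟫ = ⟪x, D y⟫)
    (ηinf ηsup : ℝ) (hη0 : 0 < ηinf) (hηle : ηinf ≤ ηsup)
    (hD_lb : ∀ x : H, ηinf * ‖x‖ ^ 2 ≤ ⟪D x, x⟫)
    (hD_ub : ∀ x : H, ⟪D x, x⟫ ≤ ηsup * ‖x‖ ^ 2)
    (ε : ℝ) (hε : 0 ≤ ε)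
    (h : H → EReal)
    (h_def : ∀ z : H, h z =
      ((f xbar + ⟪f' xbar, z - xbar⟫ + (1 / (2 * τ)) * ⟪D (z - xbar), z - xbar⟫ : ℝ) : EReal)
        + g z)
    (xhat : H) (hxhat_min : ∀ z : H, h xhat ≤ h z)
    (xtil : H) (hxtil_dom : g xtil ≠ ⊤)
    (hxtil_approx : h xtil ≤ h xhat + (ε : EReal)) :
    ∀ x : H,
      ((f xtil : EReal) + g xtil)
        + (((1 / (2 * τ)) * ⟪D (x - xtil), x - xtil⟫ : ℝ) : EReal)
        + (((1 / (2 * τ)) * ⟪D (xtil - xbar), xtil - xbar⟫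
            - (f xtil - f xbar - ⟪f' xbar, xtil - xbar⟫) : ℝ) : EReal)
      ≤ ((f x : EReal) + g x)
        + (((1 / (2 * τ)) * ⟪D (x - xbar), x - xbar⟫ : ℝ) : EReal)
        + (ε : EReal)
        + ((Real.sqrt (2 * ε * τ) / τ * Real.sqrt ⟪D (x - xtil), x - xtil⟫ : ℝ) : EReal) := by
  intro x
  have hD : ∀ z : H, 0 ≤ ⟪D z, z⟫ := fun z => le_trans (by positivity) (hD_lb z)
  have hreal : ∀ z : H, g z ≠ ⊤ → ∃ a : ℝ, g z = a := fun z hz =>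
    ⟨(g z).toReal, (EReal.coe_toReal hz (hg_ne_bot z)).symm⟩
  by_cases hx : g x = ⊤
  · rw [hx, EReal.coe_add_top, EReal.top_add_coe, EReal.top_add_coe, EReal.top_add_coe]
    exact le_top
  obtain ⟨gx, hgx⟩ := hreal x hx
  obtain ⟨gt, hgt⟩ := hreal xtil hxtil_dom
  have hhat : g xhat ≠ ⊤ := by
    intro htop
    have h1 := hxhat_min xtil
    rw [h_def, h_def, htop, hgt, EReal.coe_add_top, ← EReal.coe_add, top_le_iff] at h1
    exact EReal.coe_ne_top _ h1
  obtain ⟨gh, hgh⟩ := hreal xhat hhat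
  let q : H → ℝ := fun z =>
    f xbar + ⟪f' xbar, z - xbar⟫ + (1 / (2 * τ)) * ⟪D (z - xbar), z - xbar⟫
  have hq : ∀ z : H, h z = (q z : EReal) + g z := h_def
  have hqt : ∀ (z : H) (t : ℝ), q (t • z + (1 - t) • xhat) = t * q z + (1 - t) * q xhat
      - t * (1 - t) * ((1 / (2 * τ)) * ⟪D (z - xhat), z - xhat⟫) := by
    intro z t
    have e1 : t • z + (1 - t) • xhat - xbar = t • (z - xbar) + (1 - t) • (xhat - xbar) := by
      module
    have e2 : z - xhat = (z - xbar) - (xhat - xbar) := by abel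
    simp only [q]
    rw [e1, e2]
    generalize z - xbar = a
    generalize xhat - xbar = b
    have hs : ⟪D b, a⟫ = ⟪D a, b⟫ := by rw [hD_sa, real_inner_comm]
    simp only [map_add, map_sub, map_smul, inner_add_left, inner_add_right, inner_sub_left,
      inner_sub_right, real_inner_smul_left, real_inner_smul_right, hs]
    ring
  have growth : ∀ (z : H) (gz : ℝ), g z = gz →
      q xhat + gh + (1 / (2 * τ)) * ⟪D (z - xhat), z - xhat⟫ ≤ q z + gz := by
    intro z gz hgz
    refine quadratic_growth fun t ht ht1 => ?_
    have h1 := hxhat_min (t • z + (1 - t) • xhat)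
    have h2 := hg_convex z xhat t ht.le ht1
    rw [hgz, hgh, ← EReal.coe_mul, ← EReal.coe_mul, ← EReal.coe_add] at h2
    rw [hq (t • z + (1 - t) • xhat)] at h1
    have h3 := h1.trans (add_le_add_right h2 _)
    rw [hq, hgh, ← EReal.coe_add, ← EReal.coe_add, EReal.coe_le_coe_iff, hqt] at h3
    linarith
  have happ : q xtil + gt ≤ q xhat + gh + ε := by
    have h1 := hxtil_approx
    rw [hq, hq, hgt, hgh] at h1
    exact_mod_cast h1
  have hgx' := growth x gx hgx
  have hdist : ⟪D (xtil - xhat), xtil - xhat⟫ ≤ 2 * ε * τ := by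
    have h1 := growth xtil gt hgt
    have h2 : (1 / (2 * τ)) * ⟪D (xtil - xhat), xtil - xhat⟫ ≤ ε := by linarith
    rw [one_div, inv_mul_le_iff₀ (by positivity)] at h2
    linarith
  have hgrad := convex_gradient_inequality hf_convex (hf_grad xbar) x
  have hcs := scaled_cauchy_schwarz D hD_sa hD (x - xtil) (xtil - xhat)
  have hsqrt : √⟪D (x - xtil), x - xtil⟫ * √⟪D (xtil - xhat), xtil - xhat⟫
      ≤ √⟪D (x - xtil), x - xtil⟫ * √(2 * ε * τ) := by gcongr
  have hneg := neg_abs_le ⟪D (x - xtil), xtil - xhat⟫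
  have hexp : ⟪D (x - xhat), x - xhat⟫ = ⟪D (x - xtil), x - xtil⟫
      + 2 * ⟪D (x - xtil), xtil - xhat⟫ + ⟪D (xtil - xhat), xtil - xhat⟫ := by
    rw [show x - xhat = (x - xtil) + (xtil - xhat) by abel]
    generalize x - xtil = a
    generalize xtil - xhat = b
    have hs : ⟪D b, a⟫ = ⟪D a, b⟫ := by rw [hD_sa, real_inner_comm]
    simp only [map_add, inner_add_left, inner_add_right, hs]
    ring
  have hlow : (1 / (2 * τ)) * ⟪D (x - xtil), x - xtil⟫
      - √(2 * ε * τ) / τ * √⟪D (x - xtil), x - xtil⟫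
      ≤ (1 / (2 * τ)) * ⟪D (x - xhat), x - xhat⟫ := by
    have h1 : ⟪D (x - xtil), x - xtil⟫ - 2 * (√⟪D (x - xtil), x - xtil⟫ * √(2 * ε * τ))
        ≤ ⟪D (x - xhat), x - xhat⟫ := by
      linarith [hD (xtil - xhat)]
    have h2 := mul_le_mul_of_nonneg_left h1 (show 0 ≤ 1 / (2 * τ) by positivity)
    refine le_trans (le_of_eq ?_) h2
    field_simp
  rw [hgx, hgt]
  simp only [← EReal.coe_add, EReal.coe_le_coe_iff]
  simp only [q] at happ hgx'
  linarith
end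

section
/- Let H be a real Hilbert space, η > 0, and let {ν_inf^k}_{k∈ℕ} and {ν_sup^k}_{k∈ℕ} be sequences of reals with 0 ≤ ν_inf^k < η, ν_sup^k ≥ 0, Σ_k ν_inf^k < ∞ and Σ_k ν_sup^k < ∞. Let {D_k}_{k∈ℕ} be a sequence of bounded self-adjoint linear operators on H with (η − ν_inf^k)·I ⪯ D_k ⪯ (η + ν_sup^k)·I for all k ≥ 0. Then there exists a sequence of nonnegative reals {γ_k}_{k∈ℕ} with Σ_{k=0}^∞ γ_k < +∞ such that D_{k+1} ⪯ (1 + γ_{k+1})·D_k for all k ≥ 0. -/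
/-!
Chaining the upper bound for `D (k + 1)` with the lower bound for `D k` gives
`D (k + 1) ⪯ (η + νsup (k + 1)) / (η - νinf k) • D k`, where the factor equals `1 + γ (k + 1)` with
`γ (k + 1) = (νsup (k + 1) + νinf k) / (η - νinf k)`. This is summable by comparison with
`(2 / η) * (νsup (k + 1) + νinf k)`, since `νinf k → 0` makes the denominator eventually larger
than `η / 2`.
-/

open scoped RealInnerProductSpace

/-- **Summable spectral perturbations imply the variable-metric ordering condition:**
if `(η − ν_inf^k)·I ⪯ D_k ⪯ (η + ν_sup^k)·I` with `0 ≤ ν_inf^k < η`, `ν_sup^k ≥ 0`, and both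
sequences summable, then there are nonnegative summable `γ_k` with
`D_{k+1} ⪯ (1 + γ_{k+1})·D_k` for all `k`. -/
theorem summable_spectral_bounds_imply_metric_ordering
    {H : Type*} [NormedAddCommGroup H] [InnerProductSpace ℝ H]
    (η : ℝ) (hη : 0 < η)
    (νinf νsup : ℕ → ℝ)
    (hνinf : ∀ k, 0 ≤ νinf k ∧ νinf k < η)
    (hνsup : ∀ k, 0 ≤ νsup k)
    (hsum_inf : Summable νinf) (hsum_sup : Summable νsup)
    (D : ℕ → H →L[ℝ] H)
    (hD_sa : ∀ (k : ℕ) (x y : H), ⟪D k x, y⟫ = ⟪x, D k y⟫)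
    (hD_lb : ∀ (k : ℕ) (x : H), (η - νinf k) * ‖x‖ ^ 2 ≤ ⟪D k x, x⟫)
    (hD_ub : ∀ (k : ℕ) (x : H), ⟪D k x, x⟫ ≤ (η + νsup k) * ‖x‖ ^ 2) :
    ∃ γ : ℕ → ℝ, (∀ k, 0 ≤ γ k) ∧ Summable γ ∧
      ∀ (k : ℕ) (x : H), ⟪D (k + 1) x, x⟫ ≤ (1 + γ (k + 1)) * ⟪D k x, x⟫ := by
  -- `1 + γ (k + 1) = (η + νsup (k + 1)) / (η - νinf k)` is the ratio of the two spectral bounds;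
  -- the value `γ 0` is irrelevant, so the truncation `0 - 1 = 0` is harmless.
  refine ⟨fun k => (νsup k + νinf (k - 1)) / (η - νinf (k - 1)), fun k => ?_, ?_, fun k x => ?_⟩
  · exact div_nonneg (add_nonneg (hνsup k) (hνinf _).1) (sub_nonneg.2 (hνinf _).2.le)
  · rw [← summable_nat_add_iff 1]
    simp only [Nat.add_sub_cancel]
    have hs : Summable fun k => (2 / η) * (νsup (k + 1) + νinf k) :=
      (((summable_nat_add_iff 1).2 hsum_sup).add hsum_inf).mul_left _
    -- Summability gives `νinf k → 0`, so the denominators eventually exceed `η / 2`.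
    have hsmall : ∀ᶠ k in Filter.atTop, νinf k < η / 2 :=
      hsum_inf.tendsto_atTop_zero.eventually_lt_const (half_pos hη)
    refine Summable.of_norm_bounded_eventually_nat hs ?_
    filter_upwards [hsmall] with k hk
    have hnum : 0 ≤ νsup (k + 1) + νinf k := add_nonneg (hνsup _) (hνinf k).1
    have hden : 0 < η - νinf k := sub_pos.2 (hνinf k).2
    rw [Real.norm_of_nonneg (div_nonneg hnum hden.le), div_mul_eq_mul_div, div_le_div_iff₀ hden hη]
    nlinarith
  · have hden : 0 < η - νinf k := sub_pos.2 (hνinf k).2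
    simp only [Nat.add_sub_cancel]
    have hγ : 1 + (νsup (k + 1) + νinf k) / (η - νinf k)
        = (η + νsup (k + 1)) / (η - νinf k) := by
      field_simp
      ring
    rw [hγ]
    have hpos : 0 ≤ (η + νsup (k + 1)) / (η - νinf k) :=
      div_nonneg (add_nonneg hη.le (hνsup _)) hden.le
    calc ⟪D (k + 1) x, x⟫ ≤ (η + νsup (k + 1)) * ‖x‖ ^ 2 := hD_ub (k + 1) x
      _ = (η + νsup (k + 1)) / (η - νinf k) * ((η - νinf k) * ‖x‖ ^ 2) := by
        field_simp
      _ ≤ (η + νsup (k + 1)) / (η - νinf k) * ⟪D k x, x⟫ :=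
        mul_le_mul_of_nonneg_left (hD_lb k x) hpos
end

section
/- Let {τ_k}_{k∈ℕ} be a sequence of positive reals and let {t_k}_{k∈ℕ} satisfy t₀ ≥ 1 and t_{k+1} = (1 + √(1 + 4(τ_k/τ_{k+1})·t_k²))/2 for all k ≥ 0. Then for all k ≥ 0: √(τ_k)·t_k ≥ √(τ₀)·t₀ + (1/2)·Σ_{i=1}^{k} √(τ_i); in particular √(τ_k)·t_k ≥ (1/2)·Σ_{i=0}^{k} √(τ_i). -/
/-!
Each step of the recursion increases `√(τ k) * t k` by at least `√(τ (k + 1)) / 2`: since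
`√(1 + x ^ 2) ≥ x` with `x = 2 * √(τ k) / √(τ (k + 1)) * t k`, multiplying the recursion by
`√(τ (k + 1))` gives `√(τ (k + 1)) * t (k + 1) ≥ √(τ (k + 1)) / 2 + √(τ k) * t k`. Both bounds
follow by induction; the hypothesis `1 ≤ t 0` starts the second one.
-/

/-- **Growth estimate for `√(τ_k)·t_k`:** with `t₀ ≥ 1` and
`t_{k+1} = (1 + √(1 + 4(τ_k/τ_{k+1})t_k²))/2`, one has
`√(τ_k) t_k ≥ √(τ₀) t₀ + (1/2)∑_{i=1}^k √(τ_i)`, and in particular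
`√(τ_k) t_k ≥ (1/2)∑_{i=0}^k √(τ_i)`. -/
theorem sfista_sqrt_tau_t_growth
    (τ t : ℕ → ℝ)
    (hτ : ∀ k, 0 < τ k)
    (ht0 : 1 ≤ t 0)
    (ht_rec : ∀ k : ℕ,
      t (k + 1) = (1 + Real.sqrt (1 + 4 * (τ k / τ (k + 1)) * (t k) ^ 2)) / 2) :
    ∀ k : ℕ,
      Real.sqrt (τ 0) * t 0 + (1 / 2) * ∑ i ∈ Finset.Icc 1 k, Real.sqrt (τ i)
          ≤ Real.sqrt (τ k) * t k ∧
      (1 / 2) * ∑ i ∈ Finset.range (k + 1), Real.sqrt (τ i)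
          ≤ Real.sqrt (τ k) * t k := by
  -- Dropping the `1` under the root gives `t (k + 1) ≥ 1 / 2 + √(τ k) / √(τ (k + 1)) * t k`.
  have step : ∀ k, √(τ k) * t k + 1 / 2 * √(τ (k + 1)) ≤ √(τ (k + 1)) * t (k + 1) := by
    intro k
    have hb : 0 < √(τ (k + 1)) := Real.sqrt_pos.2 (hτ (k + 1))
    have hroot : 2 * (√(τ k) / √(τ (k + 1)) * t k)
        ≤ √(1 + 4 * (τ k / τ (k + 1)) * (t k) ^ 2) := by
      apply Real.le_sqrt_of_sq_le
      rw [mul_pow, mul_pow, div_pow, Real.sq_sqrt (hτ k).le, Real.sq_sqrt (hτ (k + 1)).le]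
      linarith
    have hmul := mul_le_mul_of_nonneg_left hroot hb.le
    have hcancel : √(τ (k + 1)) * (2 * (√(τ k) / √(τ (k + 1)) * t k))
        = 2 * (√(τ k) * t k) := by
      field_simp
    rw [ht_rec k]
    linarith
  intro k
  induction k with
  | zero =>
    have h0 : √(τ 0) ≤ √(τ 0) * t 0 := le_mul_of_one_le_right (Real.sqrt_nonneg _) ht0
    have hpos := Real.sqrt_nonneg (τ 0)
    constructor
    · simp
    · simp only [zero_add, Finset.sum_range_one]
      linarith
  | succ k ih =>
    have hk := step k
    rw [Finset.sum_Icc_succ_top (by omega), Finset.sum_range_succ _ (k + 1)]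
    constructor <;> linarith [ih.1, ih.2]
end

section
/- Let n ∈ ℕ, let z ∈ ℝⁿ with z ≥ 0 componentwise, b ∈ ℝⁿ with b > 0 componentwise, and let H ∈ ℝ^{n×n} have nonnegative entries with He > 0 and Hᵀe > 0 componentwise, where e ∈ ℝⁿ is the vector of all ones. Then the function f(x) := KL(Hx + b; z) := Σ_{i=1}^n ( z_i·log(z_i/((Hx)_i + b_i)) + (Hx)_i + b_i − z_i ) (convention 0·log 0 = 0) is coercive on the nonnegative orthant: for every sequence {x^(j)} with x^(j) ≥ 0 componentwise and ‖x^(j)‖ → ∞, one has f(x^(j)) → +∞. -/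
open Matrix Filter

/-!
The linear part of the divergence dominates its logarithmic part: each summand satisfies
`z log (z / t) + t - z ≥ t / 2 - z log 2`, so the divergence is bounded below by half of
`∑ i, (A x) i` up to a constant. Exchanging sums, `∑ i, (A x) i = ∑ k, c k * x k`, where the
column sums `c k` are positive. For `x ≥ 0` each `x k` is therefore at most
`(c k)⁻¹ * ∑ i, (A x) i`, and hence `‖x‖ ≤ K * ∑ i, (A x) i` for a constant `K > 0`,
which forces `∑ i, (A x) i → ∞`.
-/

/-- Tangent-line bound for `log` at `1`, applied to `t / (2 * z)`: half of the linear term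
absorbs the logarithm. -/
lemma half_sub_le_KL_term {z t : ℝ} (hz : 0 ≤ z) (ht : 0 < t) :
    t / 2 - z * Real.log 2 ≤ z * Real.log (z / t) + t - z := by
  rcases hz.eq_or_lt with rfl | hz
  · simp; linarith
  · have h := Real.log_le_sub_one_of_pos (x := t / (2 * z)) (by positivity)
    rw [Real.log_div ht.ne' (by positivity), Real.log_mul two_ne_zero hz.ne'] at h
    rw [Real.log_div hz.ne' ht.ne']
    have h2 := mul_le_mul_of_nonneg_left h hz.le
    have h3 : z * (t / (2 * z) - 1) = t / 2 - z := by field_simp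
    rw [h3] at h2
    linarith

lemma euclidean_norm_le_sum {n : ℕ} (x : EuclideanSpace ℝ (Fin n)) (hx : ∀ i, 0 ≤ x i) :
    ‖x‖ ≤ ∑ i, x i := by
  rw [EuclideanSpace.norm_eq]
  apply Real.sqrt_le_iff.2 ⟨Finset.sum_nonneg fun i _ => hx i, ?_⟩
  simp only [Real.norm_eq_abs, sq_abs]
  exact Finset.sum_sq_le_sq_sum_of_nonneg fun i _ => hx i

/-- **Coercivity of the generalized Kullback–Leibler data fidelity
`x ↦ KL(Hx + b; z)` on the nonnegative orthant:** along any sequence of nonnegative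
vectors whose norms tend to `+∞`, the function values tend to `+∞`. -/
theorem KL_coercive_on_nonneg_orthant
    (n : ℕ) (z b : Fin n → ℝ) (A : Matrix (Fin n) (Fin n) ℝ)
    (hz : ∀ i, 0 ≤ z i) (hb : ∀ i, 0 < b i)
    (hA : ∀ i j, 0 ≤ A i j)
    (hAe : ∀ i, 0 < A.mulVec (fun _ => 1) i)
    (hATe : ∀ j, 0 < A.transpose.mulVec (fun _ => 1) j)
    (x : ℕ → EuclideanSpace ℝ (Fin n))
    (hx_nonneg : ∀ (j : ℕ) (i : Fin n), 0 ≤ x j i)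
    (hx_norm : Tendsto (fun j => ‖x j‖) atTop atTop) :
    Tendsto (fun j => ∑ i, (z i * Real.log (z i / (A.mulVec (fun i' => x j i') i + b i))
        + (A.mulVec (fun i' => x j i') i + b i) - z i)) atTop atTop := by
  set c : Fin n → ℝ := A.transpose.mulVec (fun _ => 1) with hc
  set S : ℕ → ℝ := fun j => ∑ i, A.mulVec (fun i' => x j i') i with hS
  have hAx : ∀ j i, 0 ≤ A.mulVec (fun i' => x j i') i := by
    intro j i
    simp only [Matrix.mulVec, dotProduct]
    exact Finset.sum_nonneg fun k _ => mul_nonneg (hA i k) (hx_nonneg j k)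
  have hS0 : ∀ j, 0 ≤ S j := fun j => Finset.sum_nonneg fun i _ => hAx j i
  have hSc : ∀ j, S j = ∑ k, c k * x j k := by
    intro j
    simp only [hS, hc, Matrix.mulVec, dotProduct, Matrix.transpose_apply, mul_one]
    rw [Finset.sum_comm]
    simp only [Finset.sum_mul]
  have hxk : ∀ j k, x j k ≤ (c k)⁻¹ * S j := by
    intro j k
    rw [inv_mul_eq_div, le_div_iff₀ (hATe k), hSc, mul_comm]
    exact Finset.single_le_sum (f := fun k => c k * x j k)
      (fun k _ => mul_nonneg (hATe k).le (hx_nonneg j k)) (Finset.mem_univ k)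
  -- The summand `1` keeps the constant positive when `n = 0`.
  set K : ℝ := ∑ k, (c k)⁻¹ + 1 with hK
  have hK0 : 0 < K :=
    add_pos_of_nonneg_of_pos (Finset.sum_nonneg fun k _ => (inv_pos.2 (hATe k)).le) one_pos
  have hnorm : ∀ j, ‖x j‖ ≤ K * S j := by
    intro j
    have h1 := euclidean_norm_le_sum (x j) (hx_nonneg j)
    have h2 : ∑ k, x j k ≤ ∑ k, (c k)⁻¹ * S j := Finset.sum_le_sum fun k _ => hxk j k
    rw [← Finset.sum_mul] at h2
    rw [hK, add_mul, one_mul]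
    linarith [hS0 j]
  have hST : Tendsto S atTop atTop :=
    (tendsto_const_mul_atTop_of_pos hK0).1 (tendsto_atTop_mono hnorm hx_norm)
  have hlow : Tendsto (fun j => S j / 2 + -(∑ i, z i * Real.log 2)) atTop atTop :=
    tendsto_atTop_add_const_right _ _ (hST.atTop_div_const two_pos)
  refine tendsto_atTop_mono (fun j => ?_) hlow
  rw [← sub_eq_add_neg, hS, Finset.sum_div, ← Finset.sum_sub_distrib]
  refine Finset.sum_le_sum fun i _ => ?_
  have h := half_sub_le_KL_term (hz i) (add_pos_of_nonneg_of_pos (hAx j i) (hb i))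
  linarith [hb i]
end

section
/- Let n ∈ ℕ, let z ∈ ℝⁿ with z ≥ 0 componentwise, let β > 0 be a constant scalar background, and let H ∈ ℝ^{n×n} have nonnegative entries. Define, for x ∈ ℝⁿ with x ≥ 0 componentwise, f(x) := KL(Hx + βe; z) := Σ_{i=1}^n ( z_i·log(z_i/((Hx)_i + β)) + (Hx)_i + β − z_i ) (convention 0·log 0 = 0), where e ∈ ℝⁿ is the vector of all ones. Then: (i) the gradient of f at any x ≥ 0 is ∇f(x) = Hᵀe − Hᵀ( z ⊘ (Hx + βe) ), where ⊘ denotes componentwise division; (ii) ∇f is Lipschitz continuous on the nonnegative orthant with Lipschitz constant L_f = (max_i z_i / β²)·(max_i (Hᵀe)_i)·(max_i (He)_i), i.e. ‖∇f(x) − ∇f(y)‖₂ ≤ L_f·‖x − y‖₂ for all x, y ≥ 0 componentwise. -/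
/-!
The gradient formula is the chain rule: each summand of `f` is the scalar function
`t ↦ c * log (c / t) + t - c`, whose derivative at `t > 0` is `1 - c / t`, composed with the
affine map `x ↦ (A x)_i + β`, which is positive on the nonnegative orthant.

For the Lipschitz bound, `G x - G y = Aᵀ w` with `w_i = z_i / ((A y)_i + β) - z_i / ((A x)_i + β)`.
Since both denominators are at least `β`, `|w_i| ≤ (max z / β²) |(A (x - y))_i|`. The Schur test
`‖B v‖² ≤ (max row sum) (max column sum) ‖v‖²` (`schur_test`) for nonnegative `B`, applied once to
`Aᵀ` and once to `A`, gives the constant.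
-/

open Matrix

/-- The Schur test: `R` bounds the row sums and `C` the column sums of a nonnegative matrix. -/
lemma schur_test {n : ℕ} (B : Matrix (Fin n) (Fin n) ℝ) (hB : ∀ i j, 0 ≤ B i j) (R C : ℝ)
    (hR : ∀ i, ∑ j, B i j ≤ R) (hC : ∀ j, ∑ i, B i j ≤ C) (hR0 : 0 ≤ R) (v : Fin n → ℝ) :
    ∑ i, (∑ j, B i j * v j) ^ 2 ≤ R * C * ∑ j, v j ^ 2 := by
  have h1 : ∀ i, (∑ j, B i j * v j) ^ 2 ≤ R * ∑ j, B i j * v j ^ 2 := by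
    intro i
    -- Cauchy–Schwarz with the weights `B i j`
    have h := Finset.sum_sq_le_sum_mul_sum_of_sq_le_mul Finset.univ
      (r := fun j => B i j * v j) (f := fun j => B i j) (g := fun j => B i j * v j ^ 2)
      (fun j _ => hB i j) (fun j _ => mul_nonneg (hB i j) (sq_nonneg _)) (fun j _ => le_of_eq (by ring))
    exact h.trans (mul_le_mul_of_nonneg_right (hR i)
      (Finset.sum_nonneg fun j _ => mul_nonneg (hB i j) (sq_nonneg _)))
  calc ∑ i, (∑ j, B i j * v j) ^ 2 ≤ ∑ i, R * ∑ j, B i j * v j ^ 2 :=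
        Finset.sum_le_sum fun i _ => h1 i
    _ = R * ∑ j, (∑ i, B i j) * v j ^ 2 := by
        rw [← Finset.mul_sum, Finset.sum_comm]
        simp_rw [Finset.sum_mul]
    _ ≤ R * ∑ j, C * v j ^ 2 := by
        gcongr with j
        exact hC j
    _ = R * C * ∑ j, v j ^ 2 := by rw [← Finset.mul_sum, mul_assoc]

lemma hasDerivAt_kl (c t : ℝ) (ht : 0 < t) :
    HasDerivAt (fun s : ℝ => c * Real.log (c / s) + s - c) (1 - c / t) t := by
  -- for `c = 0` the logarithmic term vanishes identically
  rcases eq_or_ne c 0 with rfl | hc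
  · simpa using hasDerivAt_id' t
  · have h1 : HasDerivAt (fun s : ℝ => c / s) (-c / t ^ 2) t := by
      simpa using (hasDerivAt_const t c).fun_div (hasDerivAt_id' t) ht.ne'
    have h2 := (((h1.log (div_ne_zero hc ht.ne')).const_mul c).fun_add (hasDerivAt_id' t)).sub_const c
    refine h2.congr_deriv ?_
    field_simp
    ring

lemma sq_div_sub_div_le {c M β a b : ℝ} (hc : 0 ≤ c) (hcM : c ≤ M) (hβ : 0 < β) (ha : β ≤ a)
    (hb : β ≤ b) : (c / b - c / a) ^ 2 ≤ (M / β ^ 2) ^ 2 * (a - b) ^ 2 := by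
  have ha0 := hβ.trans_le ha
  have hb0 := hβ.trans_le hb
  have h : c / b - c / a = c / (a * b) * (a - b) := by
    field_simp
  rw [h, mul_pow]
  have : β ^ 2 ≤ a * b := by rw [sq]; gcongr
  gcongr
  exact hc.trans hcM

/-- **Gradient and Lipschitz constant of the Kullback–Leibler fidelity with constant
background `β`:** for `f(x) = KL(Hx + βe; z)` on the nonnegative orthant,
`∇f(x) = Hᵀe − Hᵀ(z ⊘ (Hx + βe))` and `∇f` is Lipschitz there with constant
`L_f = (max_i z_i / β²)·(max_i (Hᵀe)_i)·(max_i (He)_i)` (maxima written as suprema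
over the nonempty index type `Fin n`). -/
theorem KL_gradient_and_lipschitz
    (n : ℕ) (hn : 0 < n) (z : Fin n → ℝ) (hz : ∀ i, 0 ≤ z i)
    (β : ℝ) (hβ : 0 < β)
    (A : Matrix (Fin n) (Fin n) ℝ) (hA : ∀ i j, 0 ≤ A i j)
    (f : EuclideanSpace ℝ (Fin n) → ℝ)
    (hf : ∀ x : EuclideanSpace ℝ (Fin n),
      f x = ∑ i, (z i * Real.log (z i / (A.mulVec (fun i' => x i') i + β))
          + (A.mulVec (fun i' => x i') i + β) - z i))
    (G : EuclideanSpace ℝ (Fin n) → EuclideanSpace ℝ (Fin n))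
    (hG : ∀ (x : EuclideanSpace ℝ (Fin n)) (j : Fin n),
      G x j = A.transpose.mulVec (fun _ => 1) j
        - A.transpose.mulVec (fun i => z i / (A.mulVec (fun i' => x i') i + β)) j) :
    (∀ x : EuclideanSpace ℝ (Fin n), (∀ i, 0 ≤ x i) → HasGradientAt f (G x) x) ∧
    (∀ x y : EuclideanSpace ℝ (Fin n), (∀ i, 0 ≤ x i) → (∀ i, 0 ≤ y i) →
      ‖G x - G y‖ ≤ ((⨆ i, z i) / β ^ 2) * (⨆ i, A.transpose.mulVec (fun _ => 1) i)
          * (⨆ i, A.mulVec (fun _ => 1) i) * ‖x - y‖) := by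
  have hpos : ∀ x : EuclideanSpace ℝ (Fin n), (∀ i, 0 ≤ x i) → ∀ i,
      β ≤ A.mulVec (fun i' => x i') i + β := by
    intro x hx i
    have : 0 ≤ A.mulVec (fun i' => x i') i := by
      simp only [Matrix.mulVec, dotProduct]
      exact Finset.sum_nonneg fun j _ => mul_nonneg (hA i j) (hx j)
    linarith
  constructor
  · intro x hx
    rw [hasGradientAt_iff_hasFDerivAt]
    let ℓ : Fin n → (EuclideanSpace ℝ (Fin n) →L[ℝ] ℝ) :=
      fun i => ∑ j, A i j • EuclideanSpace.proj j
    have hℓ : ∀ i (y : EuclideanSpace ℝ (Fin n)), A.mulVec (fun i' => y i') i = ℓ i y := by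
      intro i y
      simp [ℓ, Matrix.mulVec, dotProduct]
    have hterm : ∀ i ∈ Finset.univ, HasFDerivAt (fun y : EuclideanSpace ℝ (Fin n) =>
        z i * Real.log (z i / (A.mulVec (fun i' => y i') i + β))
          + (A.mulVec (fun i' => y i') i + β) - z i)
        ((1 - z i / (A.mulVec (fun i' => x i') i + β)) • ℓ i) x := by
      intro i _
      have hp := hβ.trans_le (hpos x hx i)
      have hd : HasFDerivAt (fun y : EuclideanSpace ℝ (Fin n) =>
          A.mulVec (fun i' => y i') i + β) (ℓ i) x := by
        simp_rw [hℓ i]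
        exact (ℓ i).hasFDerivAt.add_const β
      exact (hasDerivAt_kl (z i) _ hp).comp_hasFDerivAt x hd
    have hsum := HasFDerivAt.fun_sum hterm
    rw [show f = _ from funext hf]
    refine hsum.congr_fderiv ?_
    ext1 v
    symm
    simp only [InnerProductSpace.toDual_apply_apply, PiLp.inner_apply, hG]
    simp only [_root_.sum_apply, _root_.smul_apply, ← hℓ]
    simp only [Matrix.mulVec, dotProduct, Matrix.transpose_apply, smul_eq_mul, Finset.mul_sum,
      ← Finset.sum_sub_distrib]
    rw [Finset.sum_comm]
    refine Finset.sum_congr rfl fun j _ => ?_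
    simp only [RCLike.inner_apply, conj_trivial, Finset.mul_sum]
    refine Finset.sum_congr rfl fun i _ => ?_
    ring
  · intro x y hx hy
    set M := ⨆ i, z i
    set C := ⨆ i, A.transpose.mulVec (fun _ => 1) i
    set R := ⨆ i, A.mulVec (fun _ => 1) i
    have hM : ∀ i, z i ≤ M := fun i => le_ciSup (Set.finite_range z).bddAbove i
    have hC : ∀ j, ∑ i, A i j ≤ C := fun j => by
      have := le_ciSup (Set.finite_range (A.transpose.mulVec (fun _ => (1 : ℝ)))).bddAbove j
      simpa [Matrix.mulVec, dotProduct] using this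
    have hR : ∀ i, ∑ j, A i j ≤ R := fun i => by
      have := le_ciSup (Set.finite_range (A.mulVec (fun _ => (1 : ℝ)))).bddAbove i
      simpa [Matrix.mulVec, dotProduct] using this
    have hM0 : 0 ≤ M := (hz ⟨0, hn⟩).trans (hM _)
    have hC0 : 0 ≤ C := (Finset.sum_nonneg fun i _ => hA i ⟨0, hn⟩).trans (hC _)
    have hR0 : 0 ≤ R := (Finset.sum_nonneg fun j _ => hA ⟨0, hn⟩ j).trans (hR _)
    have hK0 : 0 ≤ M / β ^ 2 := by positivity
    let w : Fin n → ℝ := fun i => z i / (A.mulVec (fun i' => y i') i + β)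
      - z i / (A.mulVec (fun i' => x i') i + β)
    have hGw : ∀ j, (G x - G y) j = ∑ i, A.transpose j i * w i := by
      intro j
      simp only [PiLp.sub_apply, hG, w, Matrix.mulVec, dotProduct, mul_sub,
        Finset.sum_sub_distrib]
      ring
    have hw : ∀ i, w i ^ 2 ≤ (M / β ^ 2) ^ 2 * (∑ j, A i j * (x - y) j) ^ 2 := by
      intro i
      have h := sq_div_sub_div_le (hz i) (hM i) hβ (hpos x hx i) (hpos y hy i)
      have e : ∑ j, A i j * (x - y) j = (A.mulVec (fun i' => x i') i + β)
          - (A.mulVec (fun i' => y i') i + β) := by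
        simp [Matrix.mulVec, dotProduct, mul_sub]
      rw [e]
      exact h
    refine le_of_sq_le_sq ?_ (by positivity)
    rw [EuclideanSpace.real_norm_sq_eq]
    calc ∑ j, (G x - G y) j ^ 2 = ∑ j, (∑ i, A.transpose j i * w i) ^ 2 := by simp_rw [hGw]
      _ ≤ C * R * ∑ i, w i ^ 2 :=
          schur_test A.transpose (fun i j => hA j i) C R hC hR hC0 w
      _ ≤ C * R * ∑ i, (M / β ^ 2) ^ 2 * (∑ j, A i j * (x - y) j) ^ 2 := by
          gcongr with i
          exact hw i
      _ = C * R * (M / β ^ 2) ^ 2 * ∑ i, (∑ j, A i j * (x - y) j) ^ 2 := by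
          rw [← Finset.mul_sum, mul_assoc (C * R)]
      _ ≤ C * R * (M / β ^ 2) ^ 2 * (R * C * ∑ j, (x - y) j ^ 2) := by
          gcongr
          exact schur_test A hA R C hR hC hR0 _
      _ = (M / β ^ 2 * C * R * ‖x - y‖) ^ 2 := by
          rw [mul_pow _ ‖x - y‖, EuclideanSpace.real_norm_sq_eq]
          ring
end
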